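/- Consider the canonical observable system of dimension n. There exists a constant c > 0, depending only on n, such that: if z = (z₁, …, z_n) is absolutely continuous on [0,1], f = (f₁, …, f_n) with each f_k ∈ W^{n,1}([0,1]), ż_i = z_{i+1} + f_i for 1 ≤ i ≤ n−1 and ż_n = f_n almost everywhere, and y = z₁, then ∫₀¹ |z(t)| dt ≤ c ( ∫₀¹ |y(t)| dt + |f|_n ), where |f|_n = Σ_{j=0}^n ∫₀¹ |f^{(j)}(t)| dt is the W^{n,1}-norm of f. -/

import Mathlib

open MeasureTheory

/-!
Compare a solution `z` with the solution `(P, P', …, P⁽ⁿ⁻¹⁾)` of the unperturbed system having the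
same initial value, where `P` is a polynomial of degree less than `n`. Their difference starts at
`0`, so integrating the triangular system from its last equation upwards bounds it uniformly by the
`L¹` norm of the perturbation. In particular `‖P‖_{L¹}` is controlled by the observation and the
perturbation, and since polynomials of degree less than `n` form a finite-dimensional space, all
derivatives of `P` are bounded uniformly by `‖P‖_{L¹}`.
-/

section

open Polynomial Set

/-- The `n`-jet `(P(t), P'(t), …, P⁽ⁿ⁻¹⁾(t))` of a real polynomial `P` at `t`. As a curve in `t` it
is, for `P` of degree less than `n`, a solution of the unperturbed canonical system. -/
noncomputable def polynomialJet (n : ℕ) (t : ℝ) : ℝ[X] →ₗ[ℝ] EuclideanSpace ℝ (Fin n) where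
  toFun P := WithLp.toLp 2 fun i => (derivative^[i] P).eval t
  map_add' P Q := by ext i; simp
  map_smul' r P := by ext i; simp

lemma polynomialJet_apply (n : ℕ) (t : ℝ) (P : ℝ[X]) (i : Fin n) :
    polynomialJet n t P i = (derivative^[i] P).eval t := rfl

lemma continuous_polynomialJet (n : ℕ) (P : ℝ[X]) : Continuous fun t => polynomialJet n t P :=
  (PiLp.continuous_toLp 2 _).comp (continuous_pi fun i => (derivative^[i] P).continuous)

lemma exists_polynomialJet_eq (n : ℕ) (a : ℝ) (x : EuclideanSpace ℝ (Fin n)) :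
    ∃ P ∈ degreeLT ℝ n, polynomialJet n a P = x := by
  set Q := (degreeLTEquiv ℝ n).symm fun i => x i / (i : ℕ).factorial
  have coeff_Q (i : Fin n) : (Q : ℝ[X]).coeff i = x i / (i : ℕ).factorial :=
    congrFun ((degreeLTEquiv ℝ n).apply_symm_apply _) i
  refine ⟨taylor (-a) Q, ?_, ?_⟩
  · simpa only [mem_degreeLT, degree_taylor] using mem_degreeLT.1 Q.2
  · ext i
    have hne : ((i : ℕ).factorial : ℝ) ≠ 0 := by positivity
    rw [polynomialJet_apply, ← factorial_smul_hasseDeriv, LinearMap.smul_apply, eval_smul,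
      ← taylor_coeff, taylor_taylor, add_neg_cancel, taylor_zero, coeff_Q, nsmul_eq_mul,
      mul_div_cancel₀ _ hne]

lemma exists_norm_le_mul_norm_of_injective {𝕜 V F G : Type*} [NontriviallyNormedField 𝕜]
    [CompleteSpace 𝕜] [AddCommGroup V] [Module 𝕜 V] [FiniteDimensional 𝕜 V]
    [SeminormedAddCommGroup F] [NormedSpace 𝕜 F] [NormedAddCommGroup G] [NormedSpace 𝕜 G]
    (S : V →ₗ[𝕜] F) (T : V →ₗ[𝕜] G) (hT : Function.Injective T) :
    ∃ C > 0, ∀ v, ‖S v‖ ≤ C * ‖T v‖ := by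
  let e := LinearEquiv.ofInjective T hT
  obtain ⟨C, hC, hbound⟩ := (S ∘ₗ e.symm.toLinearMap).toContinuousLinearMap.bound
  exact ⟨C, hC, fun v => by simpa [e] using hbound (e v)⟩

/-- A polynomial as an element of `L¹([a, b])`. -/
noncomputable def polynomialToL1 (a b : ℝ) : ℝ[X] →ₗ[ℝ] ℝ →₁[volume.restrict (Icc a b)] ℝ where
  toFun P := (P.continuous.integrableOn_Icc (a := a) (b := b)).toL1 (fun t => P.eval t)
  map_add' P Q := by
    simp_rw [eval_add]
    exact Integrable.toL1_add _ _ P.continuous.integrableOn_Icc Q.continuous.integrableOn_Icc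
  map_smul' r P := by
    simp_rw [eval_smul]
    exact Integrable.toL1_smul _ P.continuous.integrableOn_Icc r

lemma norm_polynomialToL1 (a b : ℝ) (P : ℝ[X]) :
    ‖polynomialToL1 a b P‖ = ∫ t in Icc a b, |P.eval t| :=
  L1.norm_of_fun_eq_integral_norm P.continuous.integrableOn_Icc

lemma polynomialToL1_injective {a b : ℝ} (hab : a < b) :
    Function.Injective (polynomialToL1 a b) := by
  intro P Q hPQ
  have hae : (fun t => P.eval t) =ᵐ[volume.restrict (Icc a b)] fun t => Q.eval t :=
    (Integrable.toL1_eq_toL1_iff _ _ P.continuous.integrableOn_Icc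
      Q.continuous.integrableOn_Icc).1 hPQ
  have heq : EqOn (fun t => P.eval t) (fun t => Q.eval t) (Icc a b) :=
    Measure.eqOn_Icc_of_ae_eq volume hab.ne hae P.continuousOn Q.continuousOn
  exact eq_of_infinite_eval_eq P Q ((Icc_infinite hab).mono heq)

lemma exists_norm_polynomialJet_le {a b : ℝ} (hab : a < b) (m n : ℕ) :
    ∃ C > 0, ∀ P ∈ degreeLT ℝ m, ∀ t ∈ Icc a b,
      ‖polynomialJet n t P‖ ≤ C * ∫ s in Icc a b, |P.eval s| := by
  let jetCurve : ℝ[X] →ₗ[ℝ] C(Icc a b, EuclideanSpace ℝ (Fin n)) :=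
    { toFun P := ⟨fun t => polynomialJet n t P,
        (continuous_polynomialJet n P).comp continuous_subtype_val⟩
      map_add' P Q := by ext1 t; exact map_add (polynomialJet n t) P Q
      map_smul' r P := by ext1 t; exact map_smul (polynomialJet n t) r P }
  have : FiniteDimensional ℝ (degreeLT ℝ m) := (degreeLTEquiv ℝ m).symm.finiteDimensional
  obtain ⟨C, hC, hle⟩ := exists_norm_le_mul_norm_of_injective
    (jetCurve.domRestrict (degreeLT ℝ m)) ((polynomialToL1 a b).domRestrict (degreeLT ℝ m))
    ((polynomialToL1_injective hab).comp Subtype.val_injective)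
  refine ⟨C, hC, fun P hP t ht => ?_⟩
  rw [← norm_polynomialToL1]
  exact ((jetCurve P).norm_coe_le_norm ⟨t, ht⟩).trans (hle ⟨P, hP⟩)

lemma norm_intervalIntegral_le_setIntegral_Icc {E : Type*} [NormedAddCommGroup E] [NormedSpace ℝ E]
    {a b t : ℝ} {u : ℝ → E} {g : ℝ → ℝ} (hg : IntegrableOn g (Icc a b))
    (hug : ∀ s ∈ Icc a b, ‖u s‖ ≤ g s) (ht : t ∈ Icc a b) :
    ‖∫ s in a..t, u s‖ ≤ ∫ s in Icc a b, g s := by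
  have hsub : Ioc a t ⊆ Icc a b := Ioc_subset_Icc_self.trans (Icc_subset_Icc_right ht.2)
  rw [intervalIntegral.integral_of_le ht.1]
  calc ‖∫ s in Ioc a t, u s‖ ≤ ∫ s in Ioc a t, g s :=
        norm_integral_le_of_norm_le (hg.mono_set hsub)
          (ae_restrict_of_forall_mem measurableSet_Ioc fun s hs => hug s (hsub hs))
    _ ≤ ∫ s in Icc a b, g s :=
        setIntegral_mono_set hg
          (ae_restrict_of_forall_mem measurableSet_Icc fun s hs => (norm_nonneg _).trans (hug s hs))
          hsub.eventuallyLE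

lemma setIntegral_abs_le_add {a b B : ℝ} {p y : ℝ → ℝ} (hab : a ≤ b)
    (hp : IntegrableOn p (Icc a b)) (hy : IntegrableOn y (Icc a b))
    (hyp : ∀ s ∈ Icc a b, |y s - p s| ≤ B) :
    ∫ s in Icc a b, |p s| ≤ (∫ s in Icc a b, |y s|) + (b - a) * B := by
  have hB : IntegrableOn (fun _ => B) (Icc a b) := continuousOn_const.integrableOn_Icc
  calc ∫ s in Icc a b, |p s| ≤ ∫ s in Icc a b, (|y s| + B) :=
        setIntegral_mono_on hp.abs (hy.abs.add hB) measurableSet_Icc fun s hs => by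
          linarith [abs_sub_abs_le_abs_sub (p s) (y s), abs_sub_comm (p s) (y s), hyp s hs]
    _ = (∫ s in Icc a b, |y s|) + (b - a) * B := by
        rw [integral_add hy.abs hB, setIntegral_const, Real.volume_real_Icc_of_le hab, smul_eq_mul]

lemma euclideanSpace_norm_le_sum_norm {𝕜 ι : Type*} [RCLike 𝕜] [Fintype ι]
    (x : EuclideanSpace 𝕜 ι) : ‖x‖ ≤ ∑ i, ‖x i‖ := by
  rw [EuclideanSpace.norm_eq]
  exact Real.sqrt_le_iff.2 ⟨by positivity,
    Finset.sum_sq_le_sq_sum_of_nonneg fun i _ => norm_nonneg (x i)⟩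

/-- `z` solves on `[a, b]`, in the integrated (Carathéodory) sense, the canonical observable system
with forcing `f`. Coordinates are indexed from `0`. -/
structure IsCanonicalSolution {n : ℕ} (a b : ℝ) (z f : ℝ → EuclideanSpace ℝ (Fin n)) : Prop where
  continuousOn : ContinuousOn z (Icc a b)
  integrableOn_forcing : IntegrableOn f (Icc a b)
  apply_eq_of_succ_lt : ∀ (i : Fin n) (h : (i : ℕ) + 1 < n), ∀ t ∈ Icc a b,
    z t i = z a i + ∫ s in a..t, (z s ⟨(i : ℕ) + 1, h⟩ + f s i)
  apply_eq_of_succ_eq : ∀ i : Fin n, (i : ℕ) + 1 = n → ∀ t ∈ Icc a b,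
    z t i = z a i + ∫ s in a..t, f s i

lemma eval_eq_eval_add_integral_derivative (P : ℝ[X]) (a t : ℝ) :
    P.eval t = P.eval a + ∫ s in a..t, P.derivative.eval s := by
  rw [intervalIntegral.integral_eq_sub_of_hasDerivAt (fun s _ => P.hasDerivAt s)
    (P.derivative.continuous.intervalIntegrable a t), add_sub_cancel]

lemma isCanonicalSolution_polynomialJet {n : ℕ} (a b : ℝ) {P : ℝ[X]} (hP : P ∈ degreeLT ℝ n) :
    IsCanonicalSolution a b (fun t => polynomialJet n t P) 0 := by
  have eval_eq_add_integral (k : ℕ) (t : ℝ) : (derivative^[k] P).eval t =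
      (derivative^[k] P).eval a + ∫ s in a..t, (derivative^[k + 1] P).eval s := by
    rw [Function.iterate_succ_apply']
    exact eval_eq_eval_add_integral_derivative _ a t
  refine ⟨(continuous_polynomialJet n P).continuousOn, integrableOn_zero, fun i _ t _ => ?_,
    fun i hi t _ => ?_⟩
  · simpa only [polynomialJet_apply, Pi.zero_apply, PiLp.zero_apply, add_zero]
      using eval_eq_add_integral i t
  · have hzero : derivative^[i + 1] P = 0 := by
      rw [hi]
      exact iterate_derivative_eq_zero_of_degree_lt (mem_degreeLT.1 hP)
    simpa only [polynomialJet_apply, Pi.zero_apply, PiLp.zero_apply, hzero, eval_zero]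
      using eval_eq_add_integral i t

namespace IsCanonicalSolution

variable {n : ℕ} {a b t : ℝ} {z w f g : ℝ → EuclideanSpace ℝ (Fin n)}

lemma continuousOn_apply (h : IsCanonicalSolution a b z f) (i : Fin n) :
    ContinuousOn (fun t => z t i) (Icc a b) :=
  (EuclideanSpace.proj (𝕜 := ℝ) i).continuous.comp_continuousOn h.continuousOn

lemma intervalIntegrable_apply (h : IsCanonicalSolution a b z f) (i : Fin n) (ht : t ∈ Icc a b) :
    IntervalIntegrable (fun s => z s i) volume a t :=
  ((h.continuousOn_apply i).mono (Icc_subset_Icc_right ht.2)).intervalIntegrable_of_Icc ht.1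

lemma intervalIntegrable_forcing_apply (h : IsCanonicalSolution a b z f) (i : Fin n)
    (ht : t ∈ Icc a b) : IntervalIntegrable (fun s => f s i) volume a t :=
  (intervalIntegrable_iff_integrableOn_Icc_of_le ht.1).2 <|
    ((EuclideanSpace.proj (𝕜 := ℝ) i).integrable_comp
      (h.integrableOn_forcing.mono_set (Icc_subset_Icc_right ht.2)))

lemma sub (hz : IsCanonicalSolution a b z f) (hw : IsCanonicalSolution a b w g) :
    IsCanonicalSolution a b (z - w) (f - g) where
  continuousOn := hz.continuousOn.sub hw.continuousOn
  integrableOn_forcing := hz.integrableOn_forcing.sub hw.integrableOn_forcing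
  apply_eq_of_succ_lt i hi t ht := by
    have hsub := intervalIntegral.integral_sub
      ((hz.intervalIntegrable_apply ⟨i + 1, hi⟩ ht).add (hz.intervalIntegrable_forcing_apply i ht))
      ((hw.intervalIntegrable_apply ⟨i + 1, hi⟩ ht).add (hw.intervalIntegrable_forcing_apply i ht))
    simp only [Pi.sub_apply, PiLp.sub_apply, hz.apply_eq_of_succ_lt i hi t ht,
      hw.apply_eq_of_succ_lt i hi t ht, add_sub_add_comm, ← hsub]
  apply_eq_of_succ_eq i hi t ht := by
    have hsub := intervalIntegral.integral_sub
      (hz.intervalIntegrable_forcing_apply i ht) (hw.intervalIntegrable_forcing_apply i ht)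
    simp only [Pi.sub_apply, PiLp.sub_apply, hz.apply_eq_of_succ_eq i hi t ht,
      hw.apply_eq_of_succ_eq i hi t ht, add_sub_add_comm, ← hsub]

lemma abs_apply_le_of_initial_eq_zero (h : IsCanonicalSolution a b z f) (h₀ : z a = 0) (i : Fin n)
    (ht : t ∈ Icc a b) :
    |z t i| ≤ (∑ j ∈ Finset.range (n - i), (b - a) ^ j) * ∫ s in Icc a b, ‖f s‖ := by
  have hab : a ≤ b := ht.1.trans ht.2
  obtain ⟨m, hm⟩ : ∃ m, n - i = m + 1 := Nat.exists_eq_succ_of_ne_zero (by omega)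
  rw [hm]
  induction m generalizing i t with
  | zero =>
    rw [h.apply_eq_of_succ_eq i (by omega) t ht, h₀, PiLp.zero_apply, zero_add]
    simpa using norm_intervalIntegral_le_setIntegral_Icc h.integrableOn_forcing.norm
      (fun s _ => PiLp.norm_apply_le (f s) i) ht
  | succ m ih =>
    set M := ∫ s in Icc a b, ‖f s‖
    set B := (∑ j ∈ Finset.range (m + 1), (b - a) ^ j) * M
    have hi : (i : ℕ) + 1 < n := by omega
    have hB : IntegrableOn (fun _ => B) (Icc a b) := continuousOn_const.integrableOn_Icc
    rw [h.apply_eq_of_succ_lt i hi t ht, h₀, PiLp.zero_apply, zero_add]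
    calc |∫ s in a..t, (z s ⟨i + 1, hi⟩ + f s i)| ≤ ∫ s in Icc a b, (B + ‖f s‖) :=
          norm_intervalIntegral_le_setIntegral_Icc (hB.add h.integrableOn_forcing.norm)
            (fun s hs => (norm_add_le _ _).trans
              (add_le_add (ih ⟨i + 1, hi⟩ hs (by simp only; omega))
                (PiLp.norm_apply_le (f s) i))) ht
      _ = (b - a) * B + M := by
          rw [integral_add hB h.integrableOn_forcing.norm, setIntegral_const,
            Real.volume_real_Icc_of_le hab, smul_eq_mul]
      _ = (∑ j ∈ Finset.range (m + 1 + 1), (b - a) ^ j) * M := by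
          rw [geom_sum_succ]
          ring

lemma norm_le_of_initial_eq_zero (h : IsCanonicalSolution a b z f) (h₀ : z a = 0)
    (ht : t ∈ Icc a b) :
    ‖z t‖ ≤ (∑ i : Fin n, ∑ j ∈ Finset.range (n - i), (b - a) ^ j) * ∫ s in Icc a b, ‖f s‖ := by
  rw [Finset.sum_mul]
  exact (euclideanSpace_norm_le_sum_norm (z t)).trans
    (Finset.sum_le_sum fun i _ => h.abs_apply_le_of_initial_eq_zero h₀ i ht)

lemma exists_polynomialJet_norm_sub_le (h : IsCanonicalSolution a b z f) :
    ∃ P ∈ degreeLT ℝ n, ∀ t ∈ Icc a b, ‖z t - polynomialJet n t P‖ ≤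
      (∑ i : Fin n, ∑ j ∈ Finset.range (n - i), (b - a) ^ j) * ∫ s in Icc a b, ‖f s‖ := by
  obtain ⟨P, hP, hPa⟩ := exists_polynomialJet_eq n a (z a)
  have hdiff := h.sub (isCanonicalSolution_polynomialJet a b hP)
  rw [sub_zero] at hdiff
  exact ⟨P, hP, fun t ht => hdiff.norm_le_of_initial_eq_zero (by simp [hPa]) ht⟩

end IsCanonicalSolution

theorem canonical_system_estimate_smooth_perturbation_general {n : ℕ} (hn : 0 < n) {a b : ℝ}
    (hab : a < b) :
    ∃ c > 0, ∀ z f : ℝ → EuclideanSpace ℝ (Fin n), IsCanonicalSolution a b z f →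
      ∀ t ∈ Icc a b, ‖z t‖ ≤
        c * ((∫ s in Icc a b, |z s ⟨0, hn⟩|) + ∫ s in Icc a b, ‖f s‖) := by
  obtain ⟨K, hK, hjet⟩ := exists_norm_polynomialJet_le hab n n
  set D := ∑ i : Fin n, ∑ j ∈ Finset.range (n - i), (b - a) ^ j
  have hba : 0 ≤ b - a := sub_nonneg.2 hab.le
  have hD : 0 ≤ D := Finset.sum_nonneg fun i _ => Finset.sum_nonneg fun j _ => pow_nonneg hba j
  have hKD : 0 ≤ K * ((b - a) * D) := by positivity
  set c := K + K * ((b - a) * D) + D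
  refine ⟨c, by positivity, fun z f h t ht => ?_⟩
  obtain ⟨P, hP, hdev⟩ := h.exists_polynomialJet_norm_sub_le
  set Y := ∫ s in Icc a b, |z s ⟨0, hn⟩|
  set M := ∫ s in Icc a b, ‖f s‖
  have hY : 0 ≤ Y := integral_nonneg fun s => abs_nonneg _
  have hM : 0 ≤ M := integral_nonneg fun s => norm_nonneg _
  have hPY : ∫ s in Icc a b, |P.eval s| ≤ Y + (b - a) * (D * M) :=
    setIntegral_abs_le_add hab.le P.continuous.integrableOn_Icc
      (h.continuousOn_apply ⟨0, hn⟩).integrableOn_Icc fun s hs =>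
        (PiLp.norm_apply_le (z s - polynomialJet n s P) ⟨0, hn⟩).trans (hdev s hs)
  calc ‖z t‖ ≤ ‖polynomialJet n t P‖ + ‖z t - polynomialJet n t P‖ := norm_le_norm_add_norm_sub' _ _
    _ ≤ K * (Y + (b - a) * (D * M)) + D * M :=
        add_le_add ((hjet P hP t ht).trans (by gcongr)) (hdev t ht)
    _ = K * Y + (K * ((b - a) * D) + D) * M := by ring
    _ ≤ c * Y + c * M :=
        add_le_add (mul_le_mul_of_nonneg_right (by linarith) hY)
          (mul_le_mul_of_nonneg_right (by linarith) hM)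
    _ = c * (Y + M) := by ring

end

/-- **L¹ estimate for the canonical observable system with `W^{n,1}` perturbation.**
For the canonical (Brunovsky) observable system `ż_i = z_{i+1} + f_i` (`i+1 < n`),
`ż_{n-1} = f_{n-1}` (0-indexed), with observation `y = z₀`, there is `c > 0`
depending only on `n` such that whenever `z` is absolutely continuous on `[0,1]`
and `f ∈ W^{n,1}([0,1], ℝⁿ)` — encoded by the chain `F` of its derivatives with
`F 0 = f` — one has `∫₀¹ ‖z‖ ≤ c (∫₀¹ |y| + |f|ₙ)`, where
`|f|ₙ = Σ_{j=0}^{n} ∫₀¹ ‖f^{(j)}‖`. -/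
theorem canonical_system_estimate_smooth_perturbation (n : ℕ) (hn : 0 < n) :
    ∃ c > 0, ∀ (z : ℝ → EuclideanSpace ℝ (Fin n)) (F : ℕ → ℝ → EuclideanSpace ℝ (Fin n)),
      ContinuousOn z (Set.Icc 0 1) →
      (∀ j < n, ContinuousOn (F j) (Set.Icc 0 1)) →
      (∀ j ≤ n, IntegrableOn (F j) (Set.Icc 0 1)) →
      (∀ j < n, ∀ t ∈ Set.Icc (0:ℝ) 1, F j t = F j 0 + ∫ s in (0:ℝ)..t, F (j + 1) s) →
      (∀ (i : Fin n) (h : (i : ℕ) + 1 < n), ∀ t ∈ Set.Icc (0:ℝ) 1,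
        z t i = z 0 i + ∫ s in (0:ℝ)..t, (z s ⟨(i : ℕ) + 1, h⟩ + F 0 s i)) →
      (∀ i : Fin n, (i : ℕ) + 1 = n → ∀ t ∈ Set.Icc (0:ℝ) 1,
        z t i = z 0 i + ∫ s in (0:ℝ)..t, F 0 s i) →
      (∫ t in Set.Icc (0:ℝ) 1, ‖z t‖) ≤
        c * ((∫ t in Set.Icc (0:ℝ) 1, |z t ⟨0, hn⟩|) +
             ∑ j ∈ Finset.range (n + 1), ∫ t in Set.Icc (0:ℝ) 1, ‖F j t‖) := by
  obtain ⟨c, hc, hle⟩ := canonical_system_estimate_smooth_perturbation_general hn zero_lt_one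
  refine ⟨c, hc, fun z F hz _ hF _ hnext hlast => ?_⟩
  have hsol : IsCanonicalSolution 0 1 z (F 0) := ⟨hz, hF 0 n.zero_le, hnext, hlast⟩
  calc ∫ t in Set.Icc (0:ℝ) 1, ‖z t‖
      ≤ c * ((∫ t in Set.Icc (0:ℝ) 1, |z t ⟨0, hn⟩|) + ∫ t in Set.Icc (0:ℝ) 1, ‖F 0 t‖) := by
        simpa using setIntegral_mono_on (μ := volume) hz.norm.integrableOn_Icc
          (integrable_const _) measurableSet_Icc (hle z (F 0) hsol)
    _ ≤ _ := by
        gcongr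
        exact Finset.single_le_sum (f := fun j => ∫ t in Set.Icc (0:ℝ) 1, ‖F j t‖)
          (fun j _ => integral_nonneg fun t => norm_nonneg _) (by simp)
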